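/- arXiv:2211.12059 — 3 statements merged into one kernel-verified Lean document; each statement's English description precedes it below -/
import Mathlib

section
/- Let $n$ be a positive even integer and let $p_0, p_1 \in \mathbb{C}[t_0,t_1]$ be homogeneous polynomials of degree $\tfrac{n}{2}+1$ with no common non-unit divisor. Then for every integer $i \ge 3$, the multiplication map is surjective: every homogeneous polynomial of degree $(2i-2)(\tfrac{n}{2}+1)$ in $\mathbb{C}[t_0,t_1]$ is a $\mathbb{C}$-linear combination of polynomials of the form $p_0^{j} p_1^{i-j} g$ with $0 \le j \le i$ and $g \in R_{(i-2)(\frac{n}{2}+1)}$. -/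
open MvPolynomial

/-!
Let `p` and `q` be nonzero, relatively prime binary forms of degrees `m` and `n`. The degree-`d`
parts of the ideals `(p)` and `(q)` have dimensions `d + 1 - m` and `d + 1 - n`, and they meet in
that of `(pq)`, of dimension `d + 1 - (m + n)`, where all subtractions are truncated. Once
`m + n ≤ d + 1`, their sum therefore has dimension `d + 1` and is the whole space `R_d` of forms of
degree `d`. For `m = n` this says `R_{m + e} = ⟨p, q⟩ R_e` whenever `m ≤ e + 1`, and iterating it
gives `R_{i m + e} = ⟨p, q⟩ ^ i R_e`.
-/

open scoped Pointwise in
theorem exists_eq_pow_mul_pow_of_mem_pair_pow {M : Type*} [CommMonoid M] {a b x : M} {i : ℕ}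
    (hx : x ∈ ({a, b} : Set M) ^ i) : ∃ j ≤ i, x = a ^ j * b ^ (i - j) := by
  induction i generalizing x with
  | zero => exact ⟨0, le_rfl, by simpa using hx⟩
  | succ i ih =>
    rw [pow_succ', Set.mem_mul] at hx
    obtain ⟨c, hc, y, hy, rfl⟩ := hx
    obtain ⟨j, hj, rfl⟩ := ih hy
    obtain rfl | rfl := hc
    · exact ⟨j + 1, by lia, by rw [Nat.add_sub_add_right, pow_succ', mul_assoc]⟩
    · exact ⟨j, by lia, by rw [Nat.sub_add_comm hj, pow_succ', mul_left_comm]⟩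

theorem finrank_homogeneousSubmodule (σ R : Type*) [CommSemiring R] [Nontrivial R] (d : ℕ) :
    Module.finrank R (homogeneousSubmodule σ R d) = (Nat.card σ).multichoose d := by
  classical
  rw [homogeneousSubmodule_eq_finsupp_supported, ← Sym.natCard_sym_eq_multichoose,
    Nat.card_congr (Sym.equivNatSum σ d)]
  exact Module.finrank_eq_nat_card_basis (basisRestrictSupport R {s : σ →₀ ℕ | s.degree = d})

theorem finrank_homogeneousSubmodule_fin_two (R : Type*) [CommSemiring R] [Nontrivial R]
    (d : ℕ) : Module.finrank R (homogeneousSubmodule (Fin 2) R d) = d + 1 := by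
  rw [finrank_homogeneousSubmodule, Nat.card_fin, Nat.multichoose_two]

section CommSemiring

variable {σ R : Type*} [CommSemiring R]

/-- The space of homogeneous polynomials of degree `d` divisible by `p`, that is, the degree-`d`
part of the principal ideal `(p)`. -/
noncomputable def homogeneousMultiples (p : MvPolynomial σ R) (d : ℕ) :
    Submodule R (MvPolynomial σ R) :=
  homogeneousSubmodule σ R d ⊓ (Ideal.span {p}).restrictScalars R

theorem mem_homogeneousMultiples {p f : MvPolynomial σ R} {d : ℕ} :
    f ∈ homogeneousMultiples p d ↔ f ∈ homogeneousSubmodule σ R d ∧ p ∣ f := by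
  rw [homogeneousMultiples, Submodule.mem_inf, Submodule.restrictScalars_mem,
    Ideal.mem_span_singleton]

theorem homogeneousMultiples_le (p : MvPolynomial σ R) (d : ℕ) :
    homogeneousMultiples p d ≤ homogeneousSubmodule σ R d :=
  inf_le_left

theorem homogeneousMultiples_of_isUnit {p : MvPolynomial σ R} (hp : IsUnit p) (d : ℕ) :
    homogeneousMultiples p d = homogeneousSubmodule σ R d := by
  ext f
  simp only [mem_homogeneousMultiples, hp.dvd, and_true]

attribute [local instance] MvPolynomial.gradedAlgebra in
theorem homogeneousMultiples_eq_map {p : MvPolynomial σ R} {m : ℕ}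
    (hp : p ∈ homogeneousSubmodule σ R m) (d : ℕ) :
    homogeneousMultiples p (m + d) =
      (homogeneousSubmodule σ R d).map (LinearMap.mulLeft R p) := by
  ext f
  rw [mem_homogeneousMultiples]
  constructor
  · rintro ⟨hf, c, rfl⟩
    refine ⟨DirectSum.decompose (homogeneousSubmodule σ R) c d, Subtype.mem _, ?_⟩
    rw [LinearMap.mulLeft_apply, ← DirectSum.coe_decompose_mul_add_of_left_mem _ hp,
      DirectSum.decompose_of_mem_same _ hf]
  · rintro ⟨c, hc, rfl⟩
    exact ⟨IsHomogeneous.mul hp hc, dvd_mul_right p c⟩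

attribute [local instance] MvPolynomial.gradedAlgebra in
theorem homogeneousMultiples_eq_bot {p : MvPolynomial σ R} {m d : ℕ}
    (hp : p ∈ homogeneousSubmodule σ R m) (hd : d < m) : homogeneousMultiples p d = ⊥ := by
  refine (Submodule.eq_bot_iff _).2 fun f hf => ?_
  obtain ⟨hf, c, rfl⟩ := mem_homogeneousMultiples.1 hf
  rw [← DirectSum.decompose_of_mem_same _ hf,
    DirectSum.coe_decompose_mul_of_left_mem_of_not_le _ hp hd.not_ge]

theorem homogeneousMultiples_inf [DecompositionMonoid (MvPolynomial σ R)] {p q : MvPolynomial σ R}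
    (hpq : IsRelPrime p q) (d : ℕ) :
    homogeneousMultiples p d ⊓ homogeneousMultiples q d = homogeneousMultiples (p * q) d := by
  ext f
  simp only [Submodule.mem_inf, mem_homogeneousMultiples]
  constructor
  · rintro ⟨⟨hf, hpf⟩, -, hqf⟩
    exact ⟨hf, hpq.mul_dvd hpf hqf⟩
  · rintro ⟨hf, h⟩
    exact ⟨⟨hf, dvd_of_mul_right_dvd h⟩, hf, dvd_of_mul_left_dvd h⟩

end CommSemiring

theorem finrank_homogeneousMultiples {R : Type*} [CommRing R] [IsDomain R]
    {p : MvPolynomial (Fin 2) R} {m : ℕ} (hp : p ∈ homogeneousSubmodule (Fin 2) R m)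
    (hp0 : p ≠ 0) (d : ℕ) : Module.finrank R (homogeneousMultiples p d) = d + 1 - m := by
  obtain hd | hd := lt_or_ge d m
  · rw [homogeneousMultiples_eq_bot hp hd, finrank_bot, Nat.sub_eq_zero_of_le hd]
  · obtain ⟨k, rfl⟩ := Nat.exists_eq_add_of_le hd
    have hinj : Function.Injective (LinearMap.mulLeft R p) := mul_right_injective₀ hp0
    rw [homogeneousMultiples_eq_map hp,
      ← (Submodule.equivMapOfInjective _ hinj (homogeneousSubmodule (Fin 2) R k)).finrank_eq,
      finrank_homogeneousSubmodule_fin_two]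
    lia

section Field

variable {K : Type*} [Field K] {p q : MvPolynomial (Fin 2) K} {m n : ℕ}

theorem homogeneousMultiples_sup (hp : p ∈ homogeneousSubmodule (Fin 2) K m)
    (hq : q ∈ homogeneousSubmodule (Fin 2) K n) (hpq : IsRelPrime p q) {d : ℕ}
    (hd : m + n ≤ d + 1) :
    homogeneousMultiples p d ⊔ homogeneousMultiples q d = homogeneousSubmodule (Fin 2) K d := by
  obtain rfl | hp0 := eq_or_ne p 0
  · rw [homogeneousMultiples_of_isUnit (isRelPrime_zero_left.1 hpq),
      sup_eq_right.2 (homogeneousMultiples_le _ d)]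
  obtain rfl | hq0 := eq_or_ne q 0
  · rw [homogeneousMultiples_of_isUnit (isRelPrime_zero_right.1 hpq),
      sup_eq_left.2 (homogeneousMultiples_le _ d)]
  have : Module.Finite K (homogeneousSubmodule (Fin 2) K d) :=
    Module.Finite.iff_fg.2 (homogeneousSubmodule_fg _ _ d)
  have := Submodule.finiteDimensional_of_le (homogeneousMultiples_le p d)
  have := Submodule.finiteDimensional_of_le (homogeneousMultiples_le q d)
  have dim_sup := Submodule.finrank_sup_add_finrank_inf_eq
    (homogeneousMultiples p d) (homogeneousMultiples q d)
  rw [homogeneousMultiples_inf hpq, finrank_homogeneousMultiples hp hp0,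
    finrank_homogeneousMultiples hq hq0,
    finrank_homogeneousMultiples (IsHomogeneous.mul hp hq) (mul_ne_zero hp0 hq0)] at dim_sup
  refine Submodule.eq_of_le_of_finrank_le
    (sup_le (homogeneousMultiples_le p d) (homogeneousMultiples_le q d)) ?_
  rw [finrank_homogeneousSubmodule_fin_two]
  lia

theorem homogeneousSubmodule_add_eq_span_pair_mul (hp : p ∈ homogeneousSubmodule (Fin 2) K m)
    (hq : q ∈ homogeneousSubmodule (Fin 2) K m) (hpq : IsRelPrime p q) {e : ℕ} (he : m ≤ e + 1) :
    homogeneousSubmodule (Fin 2) K (m + e) =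
      Submodule.span K {p, q} * homogeneousSubmodule (Fin 2) K e := by
  rw [← homogeneousMultiples_sup hp hq hpq (by lia), homogeneousMultiples_eq_map hp,
    homogeneousMultiples_eq_map hq, Submodule.span_insert, Submodule.sup_mul,
    Submodule.span_singleton_mul, Submodule.span_singleton_mul]
  rfl

theorem homogeneousSubmodule_mul_add_eq_span_pair_pow_mul
    (hp : p ∈ homogeneousSubmodule (Fin 2) K m) (hq : q ∈ homogeneousSubmodule (Fin 2) K m)
    (hpq : IsRelPrime p q) {e : ℕ} (he : m ≤ e + 1) (i : ℕ) :
    homogeneousSubmodule (Fin 2) K (i * m + e) =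
      Submodule.span K {p, q} ^ i * homogeneousSubmodule (Fin 2) K e := by
  induction i with
  | zero => rw [zero_mul, zero_add, pow_zero, one_mul]
  | succ i ih =>
    rw [add_one_mul, add_comm (i * m), add_assoc,
      homogeneousSubmodule_add_eq_span_pair_mul hp hq hpq (by lia), ih, pow_succ', mul_assoc]

theorem multiplication_map_surjective_general (hp : p ∈ homogeneousSubmodule (Fin 2) K m)
    (hq : q ∈ homogeneousSubmodule (Fin 2) K m) (hpq : IsRelPrime p q) {e : ℕ} (he : m ≤ e + 1)
    (i : ℕ) :
    ∀ f ∈ homogeneousSubmodule (Fin 2) K (i * m + e),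
      f ∈ Submodule.span K
        {r : MvPolynomial (Fin 2) K | ∃ j, j ≤ i ∧
          ∃ g ∈ homogeneousSubmodule (Fin 2) K e, r = p ^ j * q ^ (i - j) * g} := by
  intro f hf
  rw [homogeneousSubmodule_mul_add_eq_span_pair_pow_mul hp hq hpq he, Submodule.span_pow,
    ← Submodule.span_eq (homogeneousSubmodule (Fin 2) K e), Submodule.span_mul_span] at hf
  refine Submodule.span_mono ?_ hf
  rintro _ ⟨x, hx, g, hg, rfl⟩
  obtain ⟨j, hj, rfl⟩ := exists_eq_pow_mul_pow_of_mem_pair_pow hx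
  exact ⟨j, hj, g, hg, rfl⟩

end Field

/-- For coprime homogeneous `p₀, p₁` of degree `n/2 + 1` (with `n` a positive
even integer) and `i ≥ 3`, the multiplication map
`Sym^i ⟨p₀, p₁⟩ ⊗ R_{(i-2)(n/2+1)} → R_{(2i-2)(n/2+1)}` is surjective. -/
theorem multiplication_map_surjective (n : ℕ) (hn : 0 < n) (hne : Even n)
    (p0 p1 : MvPolynomial (Fin 2) ℂ)
    (hp0 : p0 ∈ homogeneousSubmodule (Fin 2) ℂ (n / 2 + 1))
    (hp1 : p1 ∈ homogeneousSubmodule (Fin 2) ℂ (n / 2 + 1))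
    (hcop : ∀ d : MvPolynomial (Fin 2) ℂ, d ∣ p0 → d ∣ p1 → IsUnit d)
    (i : ℕ) (hi : 3 ≤ i) :
    ∀ f ∈ homogeneousSubmodule (Fin 2) ℂ ((2 * i - 2) * (n / 2 + 1)),
      f ∈ Submodule.span ℂ
        {q : MvPolynomial (Fin 2) ℂ | ∃ j, j ≤ i ∧
          ∃ g ∈ homogeneousSubmodule (Fin 2) ℂ ((i - 2) * (n / 2 + 1)),
            q = p0 ^ j * p1 ^ (i - j) * g} := by
  have hdeg : (2 * i - 2) * (n / 2 + 1) = i * (n / 2 + 1) + (i - 2) * (n / 2 + 1) := by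
    rw [← add_mul, show 2 * i - 2 = i + (i - 2) by lia]
  have he := Nat.le_succ_of_le (Nat.le_mul_of_pos_left (n / 2 + 1) (show 0 < i - 2 by lia))
  exact hdeg ▸ multiplication_map_surjective_general hp0 hp1 (fun d => hcop d) he i
end

section
/- Let $m \ge 1$ and $a$ be integers with $5m \le 2a < 6m$, and let $g \in \mathbb{C}[\tau]$ be a polynomial of degree $2a-5m$ with nonzero constant term $g(0) \ne 0$. Then the $\mathbb{C}$-linear map from the span of $\{\tau^{-1}, \tau^{-2}, \ldots, \tau^{-(m-1)}\}$ in $L$ to $Q_{2a-6m}$ sending $v$ to the class of $g \cdot v$ modulo $S_{2a-6m}$ is surjective, and it is bijective if and only if $2a = 5m$. (This is the map $\alpha \colon H^1(\mathbb{F}_m, \mathcal{T}_{\mathbb{F}_m}) \to H^1(\sigma_\infty, \mathcal{O}_{\sigma_\infty}(B))$ for a branch curve $B = \sigma_\infty + B'$ with $\sigma_\infty \not< B'$, written in \v{C}ech representatives.) -/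
open LaurentPolynomial

/-- The subspace of `ℂ[τ, τ⁻¹]` spanned by the monomials `τ^j` with `j ≥ 0` together with the
monomials `τ^j` with `j ≤ c`. -/
noncomputable def cechSubspace (c : ℤ) : Submodule ℂ (LaurentPolynomial ℂ) :=
  Submodule.span ℂ {p : LaurentPolynomial ℂ | ∃ j : ℤ, (0 ≤ j ∨ j ≤ c) ∧ p = T j}

/-! Work over a commutative ring `R` in which `g(0)` is a unit. If `v` is supported in degrees
`> c`, then so is `g * v`, and for such elements lying in `S_c` means lying in `R[τ]`. Hence
multiplication by `g` from the span of the `τ^j` with `c < j < 0` to the quotient by `S_c` is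
multiplication by `g` on the `R[τ]`-module `τ^(c+1) R[τ] / R[τ]`. A power of `τ` annihilates this
module, and `g` is invertible modulo every power of `τ`, so the map is bijective. Extending the
source to `b < j < 0` with `b < c < 0` keeps it surjective and creates a kernel. -/

open AddMonoidAlgebra Polynomial Set

section Supported

variable {R S A : Type*} [Semiring R] [Semiring S] [Module R S] {s t : Set A}

lemma supported_union : supported R R (s ∪ t) = supported R R s ⊔ supported R R t := by
  simp only [supported_eq_span_single, image_union, Submodule.span_union]

lemma eq_zero_of_mem_supported_of_mem_supported_compl {v : S[A]} (hs : v ∈ supported R S s)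
    (hs' : v ∈ supported R S sᶜ) : v = 0 := by
  ext j
  by_cases hj : j ∈ s
  · exact mem_supported'.1 hs' j (not_not_intro hj)
  · exact mem_supported'.1 hs j hj

open scoped Pointwise in
lemma mul_mem_supported_add [Add A] {u v : S[A]} (hu : u ∈ supported R S s)
    (hv : v ∈ supported R S t) : u * v ∈ supported R S (s + t) := by
  classical
  refine (Finset.coe_subset.2 (support_coeff_mul_subset u v)).trans ?_
  rw [Finset.coe_add]
  exact add_subset_add hu hv

end Supported

lemma supported_eq_span_T {R : Type*} [Semiring R] (s : Set ℤ) :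
    supported R R s = Submodule.span R (T '' s) :=
  supported_eq_span_single R s

lemma T_mem_supported {R : Type*} [Semiring R] {s : Set ℤ} {j : ℤ} (hj : j ∈ s) :
    (T j : R[T;T⁻¹]) ∈ supported R R s := by
  rw [supported_eq_span_T]
  exact Submodule.subset_span (mem_image_of_mem T hj)

lemma toLaurent_mem_supported_Ici {R : Type*} [Semiring R] (p : R[X]) :
    p.toLaurent ∈ supported R R (Ici (0 : ℤ)) := by
  rw [mem_supported, support_coeff_toLaurent]
  simp [Set.subset_def]

lemma toLaurent_mul_mem_supported {R : Type*} [Semiring R] {s : Set ℤ} (hs : IsUpperSet s)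
    (p : R[X]) {v : R[T;T⁻¹]} (hv : v ∈ supported R R s) :
    p.toLaurent * v ∈ supported R R s := by
  refine supported_mono ?_ (mul_mem_supported_add (toLaurent_mem_supported_Ici p) hv)
  rintro _ ⟨i, hi, j, hj, rfl⟩
  exact hs (le_add_of_nonneg_left hi) hj

lemma isCoprime_X_of_isUnit_coeff_zero {R : Type*} [CommRing R] {g : R[X]}
    (h0 : IsUnit (g.coeff 0)) : IsCoprime g X := by
  rw [← divX_mul_X_add g, add_comm, IsCoprime.add_mul_right_left_iff]
  exact (isCoprime_one_left (x := X)).of_isCoprime_of_dvd_left (h0.map Polynomial.C).dvd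

section AlphaMap

variable {R : Type*} [CommRing R] {g : R[X]} {b c : ℤ}

lemma exists_toLaurent_mul_sub_mem_supported_Ici (h0 : IsUnit (g.coeff 0)) (c : ℤ) :
    ∃ h : R[X], ∀ v ∈ supported R R (Ioi c),
      h.toLaurent * (g.toLaurent * v) - v ∈ supported R R (Ici 0) := by
  obtain ⟨h, q, hq⟩ := (isCoprime_X_of_isUnit_coeff_zero h0).pow_right (n := c.natAbs)
  refine ⟨h, fun v hv ↦ ?_⟩
  have hshift : T c.natAbs * v ∈ supported R R (Ici 0) := by
    refine supported_mono ?_ (mul_mem_supported_add (T_mem_supported (mem_singleton _)) hv)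
    rintro _ ⟨_, rfl, j, hj, rfl⟩
    simp only [mem_Ioi, mem_Ici] at hj ⊢
    lia
  have hLaurent : h.toLaurent * g.toLaurent + q.toLaurent * T c.natAbs = 1 := by
    rw [← toLaurent_X_pow, ← map_mul, ← map_mul, ← map_add, hq, map_one]
  have hdiff : h.toLaurent * (g.toLaurent * v) - v = -(q.toLaurent * (T c.natAbs * v)) := by
    linear_combination v * hLaurent
  rw [hdiff]
  exact neg_mem (toLaurent_mul_mem_supported (isUpperSet_Ici 0) q hshift)

/-- The map `α` in Čech representatives: multiplication by `g` from the span of the `τ^j` with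
`b < j < 0` to the quotient of `R[τ, τ⁻¹]` by the span of the `τ^j` outside `c < j < 0`. The spans
are encoded as submodules of elements with prescribed support. -/
noncomputable def alphaMap (g : R[X]) (b c : ℤ) :
    supported R R (Ioo b 0) →ₗ[R] R[T;T⁻¹] ⧸ supported R R (Ioo c 0)ᶜ :=
  (supported R R (Ioo c 0)ᶜ).mkQ ∘ₗ LinearMap.mulLeft R g.toLaurent ∘ₗ Submodule.subtype _

lemma alphaMap_apply (v : supported R R (Ioo b 0)) :
    alphaMap g b c v = Submodule.Quotient.mk (g.toLaurent * (v : R[T;T⁻¹])) :=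
  rfl

lemma Ici_zero_subset_compl_Ioo (c : ℤ) : Ici 0 ⊆ (Ioo c 0)ᶜ :=
  fun _ hj hj' ↦ hj.not_gt hj'.2

lemma alphaMap_self_injective (h0 : IsUnit (g.coeff 0)) (c : ℤ) :
    Function.Injective (alphaMap g c c) := by
  rw [injective_iff_map_eq_zero]
  rintro ⟨v, hv⟩ hgv
  rw [alphaMap_apply, Submodule.Quotient.mk_eq_zero] at hgv
  have hvc : v ∈ supported R R (Ioi c) := supported_mono Ioo_subset_Ioi_self hv
  have hgv_Ici : g.toLaurent * v ∈ supported R R (Ici 0) := by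
    have hgvc := toLaurent_mul_mem_supported (isUpperSet_Ioi c) g hvc
    refine mem_supported.2 fun j hj ↦ ?_
    exact not_lt.1 fun hj0 ↦ hgv hj ⟨hgvc hj, hj0⟩
  obtain ⟨h, hh⟩ := exists_toLaurent_mul_sub_mem_supported_Ici h0 c
  have hv_Ici : v ∈ supported R R (Ici 0) :=
    (Submodule.sub_mem_iff_right _
      (toLaurent_mul_mem_supported (isUpperSet_Ici 0) h hgv_Ici)).1 (hh v hvc)
  exact Subtype.ext (eq_zero_of_mem_supported_of_mem_supported_compl hv
    (supported_mono (Ici_zero_subset_compl_Ioo c) hv_Ici))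

lemma alphaMap_self_surjective (h0 : IsUnit (g.coeff 0)) (c : ℤ) :
    Function.Surjective (alphaMap g c c) := by
  intro y
  obtain ⟨p, rfl⟩ := Submodule.Quotient.mk_surjective _ y
  obtain ⟨p₀, hp₀, p₁, hp₁, rfl⟩ : ∃ p₀ ∈ supported R R (Ioo c 0),
      ∃ p₁ ∈ supported R R (Ioo c 0)ᶜ, p₀ + p₁ = p := by
    rw [← Submodule.mem_sup, ← supported_union, union_compl_self]
    exact subset_univ _
  have hp₀c : p₀ ∈ supported R R (Ioi c) := supported_mono Ioo_subset_Ioi_self hp₀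
  obtain ⟨h, hh⟩ := exists_toLaurent_mul_sub_mem_supported_Ici h0 c
  obtain ⟨w, hw, r, hr, hwr⟩ : ∃ w ∈ supported R R (Ioo c 0),
      ∃ r ∈ supported R R (Ici 0), w + r = h.toLaurent * p₀ := by
    rw [← Submodule.mem_sup, ← supported_union]
    exact supported_mono Ioi_subset_Ioo_union_Ici
      (toLaurent_mul_mem_supported (isUpperSet_Ioi c) h hp₀c)
  have hgr := toLaurent_mul_mem_supported (isUpperSet_Ici 0) g hr
  have hdiff : g.toLaurent * w - (p₀ + p₁) =
      (h.toLaurent * (g.toLaurent * p₀) - p₀ - g.toLaurent * r) - p₁ := by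
    linear_combination g.toLaurent * hwr
  refine ⟨⟨w, hw⟩, (Submodule.Quotient.eq _).2 ?_⟩
  rw [LinearMap.comp_apply, Submodule.subtype_apply, LinearMap.mulLeft_apply, hdiff]
  exact sub_mem (supported_mono (Ici_zero_subset_compl_Ioo c) (sub_mem (hh p₀ hp₀c) hgr)) hp₁

lemma alphaMap_surjective (h0 : IsUnit (g.coeff 0)) (hbc : b ≤ c) :
    Function.Surjective (alphaMap g b c) := by
  intro y
  obtain ⟨v, rfl⟩ := alphaMap_self_surjective h0 c y
  exact ⟨⟨v, supported_mono (Ioo_subset_Ioo_left hbc) v.2⟩, rfl⟩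

lemma alphaMap_injective_iff [Nontrivial R] (h0 : IsUnit (g.coeff 0)) (hc : c < 0) :
    Function.Injective (alphaMap g b c) ↔ c ≤ b := by
  refine ⟨fun hinj ↦ ?_, fun hcb v w hvw ↦ ?_⟩
  · by_contra! hbc
    obtain ⟨w, hw⟩ := alphaMap_self_surjective h0 c
      (alphaMap g b c ⟨T c, T_mem_supported ⟨hbc, hc⟩⟩)
    have hwT : (w : R[T;T⁻¹]) = T c := congrArg Subtype.val <|
      hinj (a₁ := ⟨w, supported_mono (Ioo_subset_Ioo_left hbc.le) w.2⟩) hw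
    have hwc : (w : R[T;T⁻¹]).coeff c = 0 := mem_supported'.1 w.2 c (by simp)
    simp [hwT] at hwc
  · have hincl := supported_mono (R := R) (S := R) (Ioo_subset_Ioo_left (b := 0) hcb)
    exact Submodule.inclusion_injective hincl (alphaMap_self_injective h0 c hvw)

theorem alpha_map_for_sigma_general [Nontrivial R] (h0 : IsUnit (g.coeff 0)) (hbc : b ≤ c)
    (hc : c < 0) :
    Function.Surjective (alphaMap g b c) ∧ (Function.Injective (alphaMap g b c) ↔ b = c) :=
  ⟨alphaMap_surjective h0 hbc, (alphaMap_injective_iff h0 hc).trans hbc.ge_iff_eq⟩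

end AlphaMap

lemma cechSubspace_eq_supported (c : ℤ) : cechSubspace c = supported ℂ ℂ (Ioo c 0)ᶜ := by
  rw [cechSubspace, supported_eq_span_T]
  congr 1
  ext p
  simp only [mem_ofPred_eq, mem_image, mem_compl_iff, mem_Ioo, eq_comm (a := p)]
  grind

lemma span_T_neg_eq_supported {R : Type*} [Semiring R] (m : ℤ) :
    Submodule.span R {p : R[T;T⁻¹] | ∃ i : ℤ, 1 ≤ i ∧ i ≤ m - 1 ∧ p = T (-i)} =
      supported R R (Ioo (-m) 0) := by
  rw [supported_eq_span_T]
  congr 1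
  ext p
  constructor
  · rintro ⟨i, hi, him, rfl⟩
    exact ⟨-i, ⟨by lia, by lia⟩, rfl⟩
  · rintro ⟨j, ⟨hmj, hj⟩, rfl⟩
    exact ⟨-j, by lia, by lia, by rw [neg_neg]⟩

/-- For `5m ≤ 2a < 6m` and `g ∈ ℂ[τ]` of degree `2a - 5m` with `g(0) ≠ 0`, the
multiplication-by-`g` map from `⟨τ⁻¹, …, τ^{-(m-1)}⟩` to `Q_{2a-6m}` is surjective, and it is
bijective if and only if `2a = 5m` (the map `α : H¹(𝔽_m, T) → H¹(σ_∞, 𝒪_{σ_∞}(B))` for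
`B = σ_∞ + B'`). -/
theorem alpha_map_for_sigma (m a : ℤ) (hm : 1 ≤ m) (ha : 5 * m ≤ 2 * a) (ha' : 2 * a < 6 * m)
    (g : Polynomial ℂ) (hdeg : (g.natDegree : ℤ) = 2 * a - 5 * m) (h0 : g.coeff 0 ≠ 0) :
    (∀ y : LaurentPolynomial ℂ ⧸ cechSubspace (2 * a - 6 * m),
      ∃ v ∈ Submodule.span ℂ
          {p : LaurentPolynomial ℂ | ∃ i : ℤ, 1 ≤ i ∧ i ≤ m - 1 ∧ p = T (-i)},
        Submodule.Quotient.mk (p := cechSubspace (2 * a - 6 * m)) (g.toLaurent * v) = y) ∧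
    ((∀ v ∈ Submodule.span ℂ
          {p : LaurentPolynomial ℂ | ∃ i : ℤ, 1 ≤ i ∧ i ≤ m - 1 ∧ p = T (-i)},
        Submodule.Quotient.mk (p := cechSubspace (2 * a - 6 * m)) (g.toLaurent * v) = 0 →
          v = 0) ↔ 2 * a = 5 * m) := by
  have hα := alpha_map_for_sigma_general (b := -m) (c := 2 * a - 6 * m) h0.isUnit
    (by lia) (by lia)
  rw [cechSubspace_eq_supported, span_T_neg_eq_supported,
    (by lia : 2 * a = 5 * m ↔ -m = 2 * a - 6 * m)]
  simpa [Function.Surjective, injective_iff_map_eq_zero, alphaMap_apply] using hα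
end

section
/- Let $m \ge 1$ and $a$ be integers with $2a > 4m+4$, and let $g \in \mathbb{C}[\tau]$ be a polynomial of degree $2a-4m$ with nonzero constant term $g(0) \ne 0$. Then the $\mathbb{C}$-linear map from the span of $\{\tau^{-1}, \tau^{-2}, \ldots, \tau^{-(m-1)}\}$ in $L$ to $Q_{2a-5m}$ sending $v$ to the class of $g \cdot v$ modulo $S_{2a-5m}$ is surjective; consequently its rank equals $\max(0,\, 5m-2a-1)$, which is $0$ when $2a \ge 5m-1$ and satisfies $\max(0, 5m-2a-1) < m-4$ when $4m+4 < 2a < 5m$. (This computes the rank of the map $\alpha \colon H^1(\mathbb{F}_m, \mathcal{T}_{\mathbb{F}_m}) \to H^1(B, \mathcal{O}_B(B))$ for a branch curve $B = 2\sigma_\infty + B'$ with $\sigma_\infty \not< B'$, written in \v{C}ech representatives.) -/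
/-!
Write `Q_c` for the quotient by `cechSubspace c`. The classes of the `τ^j` with `c < j < 0` form a
basis of `Q_c`, so its dimension is the number of such `j`. Multiplication by `g` sends `τ^j` to
`g(0) τ^j` plus higher monomials, and the monomials `τ^j` with `j ≥ 0` vanish in `Q_c`: on this
basis the multiplication is triangular with invertible diagonal `g(0)`. Solving downwards from
`j = -1` shows that `Q_c` is spanned by the classes of `g τ^j` with `c < j < 0`, and for
`c = 2a - 5m` all these `j` satisfy `j > -m`.
-/

open LaurentPolynomial

section Basis

variable {ι R M : Type*} [Ring R] [StrongRankCondition R] [AddCommGroup M] [Module R M]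

lemma finrank_quotient_span_basis_image (b : Module.Basis ι R M) (s : Set ι) :
    Module.finrank R (M ⧸ Submodule.span R (b '' s)) = sᶜ.ncard := by
  have := nontrivial_of_invariantBasisNumber R
  have hcompl : IsCompl (Submodule.span R (b '' s)) (Submodule.span R (b '' sᶜ)) :=
    b.linearIndependent.isCompl_span_image b.span_eq isCompl_compl
  have hindep : LinearIndependent R fun i : (sᶜ : Set ι) ↦ b i :=
    b.linearIndependent.comp _ Subtype.val_injective
  calc Module.finrank R (M ⧸ Submodule.span R (b '' s))
      = Module.finrank R (Submodule.span R (b '' sᶜ)) :=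
        (Submodule.quotientEquivOfIsCompl _ _ hcompl).finrank_eq
    _ = Module.finrank R (Submodule.span R (Set.range fun i : (sᶜ : Set ι) ↦ b i)) := by
        rw [Set.image_eq_range]
    _ = sᶜ.ncard := Module.finrank_eq_nat_card_basis (Module.Basis.span hindep)

end Basis

section Semiring

variable {R : Type*} [Semiring R]

lemma span_range_T : Submodule.span R (Set.range (T : ℤ → R[T;T⁻¹])) = ⊤ :=
  (AddMonoidAlgebra.basis ℤ R).span_eq

lemma T_mem_span_T_image {s : Set ℤ} {j : ℤ} (hj : j ∈ s) :
    (T j : R[T;T⁻¹]) ∈ Submodule.span R (T '' s) :=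
  Submodule.subset_span (Set.mem_image_of_mem T hj)

lemma toLaurent_mul_T_mem {W : Submodule R R[T;T⁻¹]} {j : ℤ} (hW : ∀ i ≥ j, T i ∈ W)
    (f : Polynomial R) : f.toLaurent * T j ∈ W := by
  induction f using Polynomial.induction_on' with
  | add p q hp hq => simpa only [map_add, add_mul] using W.add_mem hp hq
  | monomial n r =>
    rw [← Polynomial.C_mul_X_pow_eq_monomial, Polynomial.toLaurent_C_mul_X_pow, mul_assoc,
      ← T_add, ← smul_eq_C_mul]
    exact W.smul_mem r (hW _ (by lia))

lemma toLaurent_mul_T_eq_divX_add (g : Polynomial R) (j : ℤ) :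
    g.toLaurent * T j = g.divX.toLaurent * T (j + 1) + g.coeff 0 • T j := by
  conv_lhs => rw [← g.divX_mul_X_add]
  rw [map_add, map_mul, Polynomial.toLaurent_X, Polynomial.toLaurent_C, add_mul, mul_assoc,
    ← T_add, add_comm 1 j, smul_eq_C_mul]

lemma setOf_T_nonneg_or_le_eq_image (c : ℤ) :
    {p : R[T;T⁻¹] | ∃ j : ℤ, (0 ≤ j ∨ j ≤ c) ∧ p = T j} = T '' (Set.Ioo c 0)ᶜ := by
  ext p
  simp only [Set.mem_ofPred_eq, Set.mem_image, Set.mem_compl_iff, Set.mem_Ioo, not_and_or, not_lt,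
    or_comm, eq_comm]

lemma setOf_T_neg_eq_image (n : ℤ) :
    {p : R[T;T⁻¹] | ∃ i : ℤ, 1 ≤ i ∧ i ≤ n - 1 ∧ p = T (-i)} = T '' Set.Ioo (-n) 0 := by
  ext p
  constructor
  · rintro ⟨i, hi, hin, rfl⟩
    exact ⟨-i, ⟨by lia, by lia⟩, rfl⟩
  · rintro ⟨j, ⟨hjn, hj⟩, rfl⟩
    exact ⟨-j, by lia, by lia, by rw [neg_neg]⟩

end Semiring

section Ring

variable {R : Type*} [Ring R] {g : Polynomial R}

lemma finrank_quotient_span_T_image [StrongRankCondition R] (s : Set ℤ) :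
    Module.finrank R (R[T;T⁻¹] ⧸ Submodule.span R ((T : ℤ → R[T;T⁻¹]) '' s)) = sᶜ.ncard :=
  finrank_quotient_span_basis_image (AddMonoidAlgebra.basis ℤ R) s

lemma T_mem_of_toLaurent_mul_T_mem (h0 : IsUnit (g.coeff 0)) {W : Submodule R R[T;T⁻¹]} {j : ℤ}
    (hW : ∀ i > j, T i ∈ W) (hg : g.toLaurent * T j ∈ W) : T j ∈ W := by
  rw [toLaurent_mul_T_eq_divX_add, W.add_mem_iff_right (toLaurent_mul_T_mem hW _)] at hg
  exact (W.smul_mem_iff_of_isUnit h0).1 hg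

lemma eq_top_of_T_mem_or_toLaurent_mul_T_mem (h0 : IsUnit (g.coeff 0))
    {W : Submodule R R[T;T⁻¹]} (hnonneg : ∀ j ≥ 0, T j ∈ W)
    (hneg : ∀ j < 0, T j ∈ W ∨ g.toLaurent * T j ∈ W) : W = ⊤ := by
  have hge : ∀ n : ℕ, ∀ j ≥ -(n : ℤ), T j ∈ W := by
    intro n
    induction n with
    | zero => simpa using hnonneg
    | succ n ih =>
      intro j hj
      rcases lt_or_ge j 0 with hj0 | hj0
      · exact (hneg j hj0).elim id
          (T_mem_of_toLaurent_mul_T_mem h0 fun i hi ↦ ih i (by lia))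
      · exact hnonneg j hj0
  rw [eq_top_iff, ← span_range_T, Submodule.span_le]
  rintro _ ⟨j, rfl⟩
  exact hge j.natAbs j (by lia)

end Ring

section CommRing

variable {R : Type*} [CommRing R] {g : Polynomial R}

lemma span_T_image_sup_map_mulLeft_eq_top (h0 : IsUnit (g.coeff 0)) {s t : Set ℤ}
    (hs : Set.Ici 0 ⊆ s) (hst : sᶜ ⊆ t) :
    Submodule.span R (T '' s) ⊔
      (Submodule.span R (T '' t)).map (LinearMap.mulLeft R g.toLaurent) = ⊤ := by
  refine eq_top_of_T_mem_or_toLaurent_mul_T_mem h0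
    (fun j hj ↦ Submodule.mem_sup_left (T_mem_span_T_image (hs hj))) fun j _ ↦ ?_
  by_cases hj : j ∈ s
  · exact .inl (Submodule.mem_sup_left (T_mem_span_T_image hj))
  · exact .inr (Submodule.mem_sup_right
      (Submodule.mem_map_of_mem (T_mem_span_T_image (hst hj))))

lemma exists_mem_span_T_image_mk_toLaurent_mul_eq (h0 : IsUnit (g.coeff 0)) {s t : Set ℤ}
    (hs : Set.Ici 0 ⊆ s) (hst : sᶜ ⊆ t)
    (y : R[T;T⁻¹] ⧸ Submodule.span R ((T : ℤ → R[T;T⁻¹]) '' s)) :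
    ∃ v ∈ Submodule.span R (T '' t), Submodule.Quotient.mk (g.toLaurent * v) = y := by
  have hy : y ∈ (⊤ : Submodule R _) := Submodule.mem_top
  rw [← (Submodule.map_mkQ_eq_top _ _).2 (span_T_image_sup_map_mulLeft_eq_top h0 hs hst)] at hy
  obtain ⟨_, ⟨v, hv, rfl⟩, hvy⟩ := hy
  exact ⟨v, hv, hvy⟩

end CommRing

theorem alpha_map_for_two_sigma_general {R : Type*} [CommRing R] [Nontrivial R] (c n : ℤ)
    (hcn : -c ≤ n) (g : Polynomial R) (h0 : IsUnit (g.coeff 0)) :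
    (∀ y : R[T;T⁻¹] ⧸ Submodule.span R {p : R[T;T⁻¹] | ∃ j : ℤ, (0 ≤ j ∨ j ≤ c) ∧ p = T j},
      ∃ v ∈ Submodule.span R {p : R[T;T⁻¹] | ∃ i : ℤ, 1 ≤ i ∧ i ≤ n - 1 ∧ p = T (-i)},
        Submodule.Quotient.mk (g.toLaurent * v) = y) ∧
    Module.finrank R
        (R[T;T⁻¹] ⧸ Submodule.span R {p : R[T;T⁻¹] | ∃ j : ℤ, (0 ≤ j ∨ j ≤ c) ∧ p = T j})
      = (-c - 1).toNat := by
  rw [setOf_T_nonneg_or_le_eq_image, setOf_T_neg_eq_image]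
  constructor
  · have hs : Set.Ici 0 ⊆ (Set.Ioo c 0)ᶜ := fun j hj hj' ↦ hj'.2.not_ge hj
    have hst : (Set.Ioo c 0)ᶜᶜ ⊆ Set.Ioo (-n) 0 := by
      rw [compl_compl]
      exact Set.Ioo_subset_Ioo_left (by lia)
    exact exists_mem_span_T_image_mk_toLaurent_mul_eq h0 hs hst
  · rw [finrank_quotient_span_T_image, compl_compl, ← Finset.coe_Ioo, Set.ncard_coe_finset,
      Int.card_Ioo, zero_sub]

/-- For `2a > 4m + 4` and `g ∈ ℂ[τ]` of degree `2a - 4m` with `g(0) ≠ 0`, the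
multiplication-by-`g` map from `⟨τ⁻¹, …, τ^{-(m-1)}⟩` to `Q_{2a-5m}` is surjective, so its rank
is `max 0 (5m - 2a - 1)`, which vanishes for `2a ≥ 5m - 1` and is `< m - 4` for
`4m + 4 < 2a < 5m` (the rank of `α : H¹(𝔽_m, T) → H¹(B, 𝒪_B(B))` for `B = 2σ_∞ + B'`). -/
theorem alpha_map_for_two_sigma (m a : ℤ) (hm : 1 ≤ m) (ha : 2 * a > 4 * m + 4)
    (g : Polynomial ℂ) (hdeg : (g.natDegree : ℤ) = 2 * a - 4 * m) (h0 : g.coeff 0 ≠ 0) :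
    (∀ y : LaurentPolynomial ℂ ⧸ cechSubspace (2 * a - 5 * m),
      ∃ v ∈ Submodule.span ℂ
          {p : LaurentPolynomial ℂ | ∃ i : ℤ, 1 ≤ i ∧ i ≤ m - 1 ∧ p = T (-i)},
        Submodule.Quotient.mk (p := cechSubspace (2 * a - 5 * m)) (g.toLaurent * v) = y) ∧
    Module.finrank ℂ (LaurentPolynomial ℂ ⧸ cechSubspace (2 * a - 5 * m))
      = (5 * m - 2 * a - 1).toNat ∧
    (2 * a ≥ 5 * m - 1 → (5 * m - 2 * a - 1).toNat = 0) ∧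
    (4 * m + 4 < 2 * a ∧ 2 * a < 5 * m → ((5 * m - 2 * a - 1).toNat : ℤ) < m - 4) := by
  obtain ⟨hsurj, hrank⟩ :=
    alpha_map_for_two_sigma_general (2 * a - 5 * m) m (by lia) g h0.isUnit
  exact ⟨hsurj, hrank.trans (by congr 1; ring), by lia, by lia⟩
end
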